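/- Fix positive integers c and n, positive integers x₁,…,xₙ with d = x₁+⋯+xₙ, and equip the rectangle Δ of width c and height d with boundary data μ₁ = (c), μ₂ = (1,…,1) (c parts equal to 1), ν₁ = (x₁,…,xₙ), ν₂ = (d). Assume the genericity condition Σ_{i∈I} xᵢ ≠ Σ_{j∈J} xⱼ for all pairs of distinct subsets I, J ⊆ {1,…,n}. If γ is a λ-increasing lattice path from (0,d) to (c,0) in Δ with n+c+1 steps and mult(γ) ≠ 0, then: (1) the last step of γ is the full right edge, from (c,d) to (c,0); (2) the first step of γ with positive horizontal displacement is an up-right step, i.e. of the form (1,s) with s > 0; (3) D(γ) = {(0,−x₁),…,(0,−xₙ),(0,−d)} as multisets; (4) the multiset of up-right steps of γ is {(1, x_{I₁}),…,(1, x_{I_ℓ})} for some pairwise disjoint nonempty subsets I₁,…,I_ℓ with union {1,…,n}, and for each a the down steps (0,−xᵢ) with i ∈ I_a occur earlier in γ than the step (1, x_{I_a}); (5) every remaining step of γ equals (1,0). Here x_I denotes Σ_{i∈I} xᵢ. -/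

import Mathlib

open Classical

noncomputable section

namespace TropPaths

/-- Lattice points of the plane. -/
abbrev Pt := ℤ × ℤ

/-- The order on `ℤ²` induced by `λ(x,y) = x - εy` for a small irrational `ε > 0`:
`p ≺ q` iff `p₁ < q₁`, or (`p₁ = q₁` and `p₂ > q₂`). -/
def lamLT (p q : Pt) : Prop := p.1 < q.1 ∨ (p.1 = q.1 ∧ q.2 < p.2)

/-- A lattice path, recorded as the list of its points, is `λ`-increasing. -/
def Increasing (γ : List Pt) : Prop := List.Chain' lamLT γ

/-- The determinant of two vectors in `ℤ²`. -/
def det (u v : Pt) : ℤ := u.1 * v.2 - u.2 * v.1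

/-- The `k`-th point of a path (junk value out of range). -/
def pt (γ : List Pt) (k : ℕ) : Pt := γ.getD k (0, 0)

/-- The `k`-th step vector of a path. -/
def stepAt (γ : List Pt) (k : ℕ) : Pt := pt γ (k + 1) - pt γ k

/-- The list of all step vectors of a path. -/
def steps (γ : List Pt) : List Pt := List.zipWith (fun a b => b - a) γ γ.tail

/-- The multiset of down steps `(0,-s)`, `s > 0`, of a path. -/
def downSteps (γ : List Pt) : Multiset Pt :=
  Multiset.filter (fun v => v.1 = 0 ∧ v.2 < 0) (steps γ : Multiset Pt)

/-- The multiset of up-right steps of a path. -/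
def upRightSteps (γ : List Pt) : Multiset Pt :=
  Multiset.filter (fun v => 0 < v.1 ∧ 0 < v.2) (steps γ : Multiset Pt)

/-- The path makes a turn of sign `s` at the (interior) index `k`; for left turns
`s = (0 < ·)`, for right turns `s = (· < 0)`. -/
def TurnAt (s : ℤ → Prop) (γ : List Pt) (k : ℕ) : Prop :=
  0 < k ∧ k + 1 < γ.length ∧ s (det (pt γ k - pt γ (k - 1)) (pt γ (k + 1) - pt γ k))

/-- `k` is the first turn of sign `s` of the path. -/
def FirstTurn (s : ℤ → Prop) (γ : List Pt) (k : ℕ) : Prop :=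
  TurnAt s γ k ∧ ∀ j, TurnAt s γ j → k ≤ j

/-- Twice the area of the triangle with vertices `γ(k-1), γ(k), γ(k+1)`. -/
def triArea2 (γ : List Pt) (k : ℕ) : ℕ :=
  (det (pt γ k - pt γ (k - 1)) (pt γ (k + 1) - pt γ k)).natAbs

/-- The path obtained by cutting the corner at index `k`, i.e. deleting the point `γ(k)`. -/
def cut (γ : List Pt) (k : ℕ) : List Pt := γ.eraseIdx k

/-- The path obtained by completing the parallelogram at index `k`, i.e. replacing
`γ(k)` by `γ(k-1) + γ(k+1) - γ(k)`. -/
def push (γ : List Pt) (k : ℕ) : List Pt :=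
  γ.set k (pt γ (k - 1) + pt γ (k + 1) - pt γ k)

/-- All points of the path lie in `Δ`. -/
def Inside (Δ : Set Pt) (γ : List Pt) : Prop := ∀ z ∈ γ, z ∈ Δ

/-- Mikhalkin's multiplicity recursion, as a functional relation: `MultRel Δ Init s γ m`
means that the recursion (performed always at the *first* turn of sign `s`) assigns the
multiplicity `m` to the path `γ`.  Here `Δ` is the set of lattice points of the polygon,
`Init` the set of initial paths (of multiplicity `1`), and `s` the turn sign
(`0 < ·` for left turns / `mult₊`, `· < 0` for right turns / `mult₋`). -/
inductive MultRel (Δ : Set Pt) (Init : List Pt → Prop) (s : ℤ → Prop) : List Pt → ℕ → Prop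
  | init {γ : List Pt} : Init γ → MultRel Δ Init s γ 1
  | noTurn {γ : List Pt} : ¬Init γ → (∀ k, ¬TurnAt s γ k) → MultRel Δ Init s γ 0
  | stepIn {γ : List Pt} {k m' m'' : ℕ} : ¬Init γ → FirstTurn s γ k →
      Inside Δ (push γ k) → MultRel Δ Init s (cut γ k) m' →
      MultRel Δ Init s (push γ k) m'' →
      MultRel Δ Init s γ (triArea2 γ k * m' + m'')
  | stepOut {γ : List Pt} {k m' : ℕ} : ¬Init γ → FirstTurn s γ k →
      ¬Inside Δ (push γ k) → MultRel Δ Init s (cut γ k) m' →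
      MultRel Δ Init s γ (triArea2 γ k * m')

/-- The multiplicity function determined by Mikhalkin's recursion. -/
def multOf (Δ : Set Pt) (Init : List Pt → Prop) (s : ℤ → Prop) (γ : List Pt) : ℕ :=
  if h : ∃ m, MultRel Δ Init s γ m then h.choose else 0

/-- `γ ≺ δ`: the path `δ` is obtained from `γ` by finitely many steps of the multiplicity
recursion (each step cuts the corner at the first turn of sign `s`, or completes the
parallelogram there). -/
inductive Reaches (Δ : Set Pt) (Init : List Pt → Prop) (s : ℤ → Prop) : List Pt → List Pt → Prop
  | refl (γ : List Pt) : Reaches Δ Init s γ γ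
  | cutStep {γ δ : List Pt} {k : ℕ} : ¬Init γ → FirstTurn s γ k →
      Reaches Δ Init s (cut γ k) δ → Reaches Δ Init s γ δ
  | pushStep {γ δ : List Pt} {k : ℕ} : ¬Init γ → FirstTurn s γ k →
      Inside Δ (push γ k) → Reaches Δ Init s (push γ k) δ → Reaches Δ Init s γ δ

/-- The lattice path starting at `p` with the given list of step vectors. -/
def pathFrom : Pt → List Pt → List Pt
  | p, [] => [p]
  | p, v :: vs => p :: pathFrom (p + v) vs

/-- Horizontal (rightward) steps of the given sizes. -/
def hSteps (l : List ℕ) : List Pt := l.map fun k => ((k : ℤ), 0)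

/-- Vertical downward steps of the given sizes. -/
def dSteps (l : List ℕ) : List Pt := l.map fun k => ((0 : ℤ), -(k : ℤ))

/-- A multiset of positive integers is a partition of `t`. -/
def IsPartition (m : Multiset ℕ) (t : ℕ) : Prop := (∀ k ∈ m, 0 < k) ∧ m.sum = t

/-! ## The rectangle `[0,c] × [0,d]` -/

/-- The lattice points of the rectangle with vertices `(0,0), (c,0), (0,d), (c,d)`. -/
def rect (c d : ℕ) : Set Pt := {z | 0 ≤ z.1 ∧ z.1 ≤ (c : ℤ) ∧ 0 ≤ z.2 ∧ z.2 ≤ (d : ℤ)}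

/-- `β₊`-initial paths of the rectangle: from `p = (0,d)` clockwise along the top edge with
step sizes the parts of `μ₂` and then down the right edge with step sizes the parts of `ν₂`. -/
def InitPlusRect (d : ℕ) (μ₂ ν₂ : Multiset ℕ) (γ : List Pt) : Prop :=
  ∃ s t : List ℕ, (s : Multiset ℕ) = μ₂ ∧ (t : Multiset ℕ) = ν₂ ∧
    γ = pathFrom (0, (d : ℤ)) (hSteps s ++ dSteps t)

/-- `β₋`-initial paths of the rectangle: from `p = (0,d)` counterclockwise down the left edge
with step sizes the parts of `ν₁` and then along the bottom edge with step sizes the parts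
of `μ₁`. -/
def InitMinusRect (d : ℕ) (μ₁ ν₁ : Multiset ℕ) (γ : List Pt) : Prop :=
  ∃ s t : List ℕ, (s : Multiset ℕ) = ν₁ ∧ (t : Multiset ℕ) = μ₁ ∧
    γ = pathFrom (0, (d : ℤ)) (dSteps s ++ hSteps t)

/-- `mult₊` for the rectangle with boundary data `(μ₁, μ₂, ν₁, ν₂)`. -/
def multPlusRect (c d : ℕ) (μ₂ ν₂ : Multiset ℕ) : List Pt → ℕ :=
  multOf (rect c d) (InitPlusRect d μ₂ ν₂) (fun x => 0 < x)

/-- `mult₋` for the rectangle with boundary data `(μ₁, μ₂, ν₁, ν₂)`. -/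
def multMinusRect (c d : ℕ) (μ₁ ν₁ : Multiset ℕ) : List Pt → ℕ :=
  multOf (rect c d) (InitMinusRect d μ₁ ν₁) (fun x => x < 0)

/-- `mult = mult₊ · mult₋` for the rectangle with boundary data `(μ₁, μ₂, ν₁, ν₂)`. -/
def multRect (c d : ℕ) (μ₁ μ₂ ν₁ ν₂ : Multiset ℕ) (γ : List Pt) : ℕ :=
  multPlusRect c d μ₂ ν₂ γ * multMinusRect c d μ₁ ν₁ γ

/-- A `λ`-increasing lattice path from `(0,d)` to `(c,0)` contained in the rectangle. -/
def IsPathRect (c d : ℕ) (γ : List Pt) : Prop :=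
  Increasing γ ∧ γ.head? = some (0, (d : ℤ)) ∧ γ.getLast? = some ((c : ℤ), 0) ∧
    Inside (rect c d) γ

/-- The genericity condition: all subset sums of the `xᵢ` are distinct. -/
def Generic {n : ℕ} (x : Fin n → ℕ) : Prop :=
  ∀ I J : Finset (Fin n), I ≠ J → ∑ i ∈ I, x i ≠ ∑ j ∈ J, x j

/-!
A path is encoded by the list of its steps: deleting a turning point adds the two adjacent steps,
and reflecting it swaps them. Hence a path of nonzero multiplicity arises from an initial path by
splitting and swapping steps, and a property of the initial path that survives these two operations
holds for it.

On the negative side the initial path goes down the left edge and then takes one step of length `c`.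
The first leg of a right turn has positive width, so the parts of the left edge survive as down
steps, the first step of positive width starts to go up as soon as it is changed, and a final
horizontal step of width one is excluded unless `c = 1`.

On the positive side the initial path takes `c` unit steps and then one full down step. Splitting
only ever cuts down steps off a step of width one, and swapping never brings such a down step behind
the step it was cut from. So the path is a shuffle of the full down step with `c` blocks, each of
which consists of down steps followed by the step of width one that returns to the old height.

A path with `n + c + 1` steps has room for exactly `n` down steps in the blocks, so these are the
`n` down steps inherited from the left edge.
-/

/-! ## Paths and their step lists -/

theorem pathFrom_append_cons (p : Pt) (A B : List Pt) (u : Pt) :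
    pathFrom p (A ++ u :: B) = pathFrom p A ++ pathFrom (p + A.sum + u) B := by
  induction A generalizing p with
  | nil => simp [pathFrom]
  | cons a A ih => simp [pathFrom, ih, add_assoc]

theorem length_pathFrom (p : Pt) (w : List Pt) : (pathFrom p w).length = w.length + 1 := by
  induction w generalizing p with
  | nil => rfl
  | cons a w ih => simp [pathFrom, ih]

theorem head?_pathFrom (p : Pt) (w : List Pt) : (pathFrom p w).head? = some p := by
  cases w <;> rfl

theorem getLast?_pathFrom (p : Pt) (w : List Pt) :
    (pathFrom p w).getLast? = some (p + w.sum) := by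
  rcases List.eq_nil_or_concat w with rfl | ⟨w, a, rfl⟩
  · simp [pathFrom]
  · simp [pathFrom_append_cons, pathFrom, add_assoc]

theorem exists_eq_pathFrom {γ : List Pt} {p : Pt} (h : γ.head? = some p) :
    ∃ w, γ = pathFrom p w := by
  induction γ generalizing p with
  | nil => simp at h
  | cons a γ ih =>
    obtain rfl : a = p := by simpa using h
    cases γ with
    | nil => exact ⟨[], rfl⟩
    | cons b γ =>
      obtain ⟨w, hw⟩ := ih rfl
      exact ⟨(b - a) :: w, by simp [pathFrom, hw]⟩

theorem steps_pathFrom (p : Pt) (w : List Pt) : steps (pathFrom p w) = w := by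
  induction w generalizing p with
  | nil => rfl
  | cons a w ih =>
    have hw := ih (p + a)
    cases w with
    | nil => simp [pathFrom, steps]
    | cons b w =>
      simp only [pathFrom, steps, List.tail_cons, List.zipWith_cons_cons] at hw ⊢
      rw [hw, add_sub_cancel_left]

theorem pathFrom_injective (p : Pt) : Function.Injective (pathFrom p) :=
  Function.LeftInverse.injective (steps_pathFrom p)

theorem increasing_pathFrom_iff {p : Pt} {w : List Pt} :
    Increasing (pathFrom p w) ↔ ∀ a ∈ w, lamLT 0 a := by
  induction w generalizing p with
  | nil => exact iff_of_true (List.isChain_singleton p) (by simp)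
  | cons a w ih =>
    have hstep : lamLT p (p + a) ↔ lamLT 0 a := by simp [lamLT, eq_comm]
    have hhead : (∀ b ∈ (pathFrom (p + a) w).head?, lamLT p b) ↔ lamLT p (p + a) := by
      simp [head?_pathFrom]
    rw [List.forall_mem_cons, ← ih (p := p + a), ← hstep, ← hhead]
    exact List.isChain_cons

theorem pt_pathFrom_append (p : Pt) (A B : List Pt) :
    pt (pathFrom p (A ++ B)) A.length = p + A.sum := by
  induction A generalizing p with
  | nil => cases B <;> simp [pathFrom, pt]
  | cons a A ih => simpa [pt, pathFrom, add_assoc] using ih (p + a)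

theorem pt_pathFrom_length (p : Pt) (w : List Pt) : pt (pathFrom p w) w.length = p + w.sum := by
  simpa using pt_pathFrom_append p w []

theorem pt_pathFrom_append_cons_succ (p : Pt) (A B : List Pt) (u : Pt) :
    pt (pathFrom p (A ++ u :: B)) (A.length + 1) = p + A.sum + u := by
  simpa [add_assoc] using pt_pathFrom_append p (A ++ [u]) B

theorem stepAt_pathFrom_append_cons (p : Pt) (A B : List Pt) (u : Pt) :
    stepAt (pathFrom p (A ++ u :: B)) A.length = u := by
  rw [stepAt, pt_pathFrom_append_cons_succ, pt_pathFrom_append, add_sub_cancel_left]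

theorem stepAt_pathFrom (p : Pt) {w : List Pt} {k : ℕ} (hk : k < w.length) :
    stepAt (pathFrom p w) k = w[k] := by
  have hstep := stepAt_pathFrom_append_cons p (w.take k) (w.drop (k + 1)) w[k]
  rwa [List.cons_getElem_drop_succ, List.take_append_drop, List.length_take_of_le hk.le] at hstep

theorem cut_pathFrom (p : Pt) (A B : List Pt) (u v : Pt) :
    cut (pathFrom p (A ++ u :: v :: B)) (A.length + 1) = pathFrom p (A ++ (u + v) :: B) := by
  rw [cut, pathFrom_append_cons, pathFrom_append_cons,
    List.eraseIdx_append_of_length_le (length_pathFrom p A).le]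
  simp [length_pathFrom, pathFrom, add_assoc]

theorem push_pathFrom (p : Pt) (A B : List Pt) (u v : Pt) :
    push (pathFrom p (A ++ u :: v :: B)) (A.length + 1) = pathFrom p (A ++ v :: u :: B) := by
  have hprev : pt (pathFrom p (A ++ u :: v :: B)) A.length = p + A.sum :=
    pt_pathFrom_append p A _
  have hturn : pt (pathFrom p (A ++ u :: v :: B)) (A.length + 1) = p + A.sum + u :=
    pt_pathFrom_append_cons_succ p A _ u
  have hnext : pt (pathFrom p (A ++ u :: v :: B)) (A.length + 1 + 1) = p + A.sum + u + v := by
    simpa [add_assoc] using pt_pathFrom_append_cons_succ p (A ++ [u]) B v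
  have hcorner : p + A.sum + (p + A.sum + u + v) - (p + A.sum + u) = p + A.sum + v := by abel
  rw [push, Nat.add_sub_cancel, hprev, hturn, hnext, hcorner, pathFrom_append_cons,
    pathFrom_append_cons, List.set_append_right _ _ (length_pathFrom p A).le]
  simp [length_pathFrom, pathFrom, add_right_comm]

theorem TurnAt.exists_pathFrom {s : ℤ → Prop} {p : Pt} {w : List Pt} {k : ℕ}
    (h : TurnAt s (pathFrom p w) k) :
    ∃ A u v B, w = A ++ u :: v :: B ∧ k = A.length + 1 ∧ s (det u v) := by
  obtain ⟨hk, hlt, hs⟩ := h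
  obtain ⟨j, rfl⟩ := Nat.exists_eq_succ_of_ne_zero hk.ne'
  rw [length_pathFrom] at hlt
  have hj : j + 1 < w.length := by omega
  refine ⟨w.take j, w[j], w[j + 1], w.drop (j + 2), ?_, ?_, ?_⟩
  · rw [List.cons_getElem_drop_succ, List.cons_getElem_drop_succ, List.take_append_drop]
  · rw [List.length_take_of_le (by omega)]
  · rw [← stepAt_pathFrom p hj, ← stepAt_pathFrom p (Nat.lt_of_succ_lt hj)]
    exact hs

/-! ## Induction along the multiplicity recursion -/

/-- `w` is the list of steps of a `λ`-increasing lattice path from `p` to `q` in `Δ`. -/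
structure IsStepList (Δ : Set Pt) (p q : Pt) (w : List Pt) : Prop where
  lamLT_zero : ∀ a ∈ w, lamLT 0 a
  inside : Inside Δ (pathFrom p w)
  add_sum : p + w.sum = q

namespace IsStepList

variable {Δ : Set Pt} {p q u v : Pt} {w A B : List Pt}

theorem add_prefix_sum_mem (h : IsStepList Δ p q (A ++ B)) : p + A.sum ∈ Δ := by
  have hlt : A.length < (pathFrom p (A ++ B)).length := by
    rw [length_pathFrom, List.length_append]; omega
  apply h.inside
  rw [← pt_pathFrom_append p A B, pt, List.getD_eq_getElem _ _ hlt]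
  exact List.getElem_mem _

theorem cut (h : IsStepList Δ p q (A ++ u :: v :: B)) :
    IsStepList Δ p q (A ++ (u + v) :: B) where
  lamLT_zero a ha := by
    have hu := h.lamLT_zero u (by simp)
    have hv := h.lamLT_zero v (by simp)
    simp only [List.mem_append, List.mem_cons] at ha
    rcases ha with ha | rfl | ha
    · exact h.lamLT_zero a (by simp [ha])
    · simp only [lamLT, Prod.fst_zero, Prod.snd_zero, Prod.fst_add, Prod.snd_add] at hu hv ⊢
      omega
    · exact h.lamLT_zero a (by simp [ha])
  inside z hz := h.inside z <| by
    rw [← cut_pathFrom] at hz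
    exact List.mem_of_mem_eraseIdx hz
  add_sum := by simpa [add_assoc] using h.add_sum

theorem push (h : IsStepList Δ p q (A ++ u :: v :: B))
    (hΔ : Inside Δ (pathFrom p (A ++ v :: u :: B))) :
    IsStepList Δ p q (A ++ v :: u :: B) := by
  have hswap : (A ++ v :: u :: B).Perm (A ++ u :: v :: B) := (List.Perm.swap u v B).append_left A
  exact ⟨fun a ha => h.lamLT_zero a (hswap.mem_iff.1 ha), hΔ, hswap.sum_eq ▸ h.add_sum⟩

end IsStepList

theorem induction_of_multRel {Δ : Set Pt} {p q : Pt} {Init : List Pt → Prop} {s : ℤ → Prop}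
    {P : List Pt → Prop} (hinit : ∀ w, Init (pathFrom p w) → P w)
    (hcut : ∀ A u v B, IsStepList Δ p q (A ++ u :: v :: B) → s (det u v) →
      P (A ++ (u + v) :: B) → P (A ++ u :: v :: B))
    (hpush : ∀ A u v B, IsStepList Δ p q (A ++ u :: v :: B) → s (det u v) →
      P (A ++ v :: u :: B) → P (A ++ u :: v :: B))
    {γ : List Pt} {m : ℕ} (h : MultRel Δ Init s γ m) (hm : m ≠ 0) {w : List Pt}
    (hγ : γ = pathFrom p w) (hw : IsStepList Δ p q w) : P w := by
  induction h generalizing w with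
  | init hi => exact hinit w (hγ ▸ hi)
  | noTurn => exact absurd rfl hm
  | @stepIn γ k m' m'' _ hturn hin _ _ ihcut ihpush =>
    subst hγ
    obtain ⟨A, u, v, B, rfl, rfl, hs⟩ := hturn.1.exists_pathFrom
    rw [cut_pathFrom] at ihcut
    rw [push_pathFrom] at ihpush hin
    obtain hm' | hm'' : m' ≠ 0 ∨ m'' ≠ 0 := by
      by_contra! hzero
      simp [hzero] at hm
    · exact hcut A u v B hw hs (ihcut hm' rfl hw.cut)
    · exact hpush A u v B hw hs (ihpush hm'' rfl (hw.push hin))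
  | stepOut _ hturn _ _ ihcut =>
    subst hγ
    obtain ⟨A, u, v, B, rfl, rfl, hs⟩ := hturn.1.exists_pathFrom
    rw [cut_pathFrom] at ihcut
    exact hcut A u v B hw hs (ihcut (right_ne_zero_of_mul hm) rfl hw.cut)

theorem induction_of_multOf_ne_zero {Δ : Set Pt} {p q : Pt} {Init : List Pt → Prop}
    {s : ℤ → Prop} {P : List Pt → Prop} (hinit : ∀ w, Init (pathFrom p w) → P w)
    (hcut : ∀ A u v B, IsStepList Δ p q (A ++ u :: v :: B) → s (det u v) →
      P (A ++ (u + v) :: B) → P (A ++ u :: v :: B))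
    (hpush : ∀ A u v B, IsStepList Δ p q (A ++ u :: v :: B) → s (det u v) →
      P (A ++ v :: u :: B) → P (A ++ u :: v :: B))
    {w : List Pt} (hw : IsStepList Δ p q w) (hm : multOf Δ Init s (pathFrom p w) ≠ 0) : P w := by
  unfold multOf at hm
  split_ifs at hm with hex
  · exact induction_of_multRel hinit hcut hpush hex.choose_spec hm rfl hw
  · exact absurd rfl hm

/-! ## Step lists in the rectangle -/

/-- A down step; reducible, so that the filter by `IsDown` is literally the one in `downSteps`. -/
abbrev IsDown (a : Pt) : Prop := a.1 = 0 ∧ a.2 < 0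

/-- The down step of length `k`. -/
def downStep (k : ℕ) : Pt := (0, -k)

theorem isDown_downStep {k : ℕ} (hk : 0 < k) : IsDown (downStep k) := by
  simpa [IsDown, downStep] using hk

theorem downSteps_pathFrom (p : Pt) (w : List Pt) :
    downSteps (pathFrom p w) = (w : Multiset Pt).filter IsDown := by
  rw [downSteps, steps_pathFrom]

theorem hSteps_eq_map (l : List ℕ) : hSteps l = l.map fun k : ℕ => ((k : ℤ), 0) := by
  simp [hSteps, ← List.map_eq_flatMap]

theorem dSteps_eq_map (l : List ℕ) : dSteps l = l.map downStep := by
  simp [dSteps, ← List.map_eq_flatMap, Function.comp_def, downStep]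

theorem InitMinusRect.eq_map_downStep_append {d c : ℕ} {ν : Multiset ℕ} {w : List Pt}
    (h : InitMinusRect d {c} ν (pathFrom (0, d) w)) :
    ∃ s : List ℕ, (s : Multiset ℕ) = ν ∧ w = s.map downStep ++ [((c : ℤ), 0)] := by
  obtain ⟨s, t, hs, ht, hw⟩ := h
  obtain rfl := Multiset.coe_eq_singleton.1 ht
  exact ⟨s, hs, by rw [pathFrom_injective _ hw, dSteps_eq_map, hSteps_eq_map]; rfl⟩

theorem InitPlusRect.eq_replicate_append {d c : ℕ} {w : List Pt}
    (h : InitPlusRect d (Multiset.replicate c 1) {d} (pathFrom (0, d) w)) :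
    w = List.replicate c (1, 0) ++ [downStep d] := by
  obtain ⟨s, t, hs, ht, hw⟩ := h
  rw [← Multiset.coe_replicate, Multiset.coe_eq_coe] at hs
  obtain rfl := List.perm_replicate.1 hs
  obtain rfl := Multiset.coe_eq_singleton.1 ht
  rw [pathFrom_injective _ hw, dSteps_eq_map, hSteps_eq_map, List.map_replicate]
  rfl

/-- `w` is the list of steps of a `λ`-increasing path from `(0,d)` to `(c,0)` in the rectangle. -/
abbrev IsRectStepList (c d : ℕ) (w : List Pt) : Prop := IsStepList (rect c d) (0, d) (c, 0) w

theorem IsPathRect.exists_isRectStepList {c d : ℕ} {γ : List Pt} (h : IsPathRect c d γ) :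
    ∃ w, γ = pathFrom (0, d) w ∧ IsRectStepList c d w := by
  obtain ⟨hinc, hhead, hlast, hin⟩ := h
  obtain ⟨w, rfl⟩ := exists_eq_pathFrom hhead
  refine ⟨w, rfl, increasing_pathFrom_iff.1 hinc, hin, ?_⟩
  simpa only [getLast?_pathFrom, Option.some.injEq] using hlast

namespace IsStepList

variable {c d : ℕ} {w A B : List Pt}

theorem snd_prefix_sum_nonpos (h : IsRectStepList c d (A ++ B)) : A.sum.2 ≤ 0 := by
  have hle := h.add_prefix_sum_mem.2.2.2
  simpa using hle

theorem snd_suffix_sum_nonpos (h : IsRectStepList c d (A ++ B)) : B.sum.2 ≤ 0 := by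
  have hheight := h.add_prefix_sum_mem.2.2.1
  have hend := congrArg Prod.snd h.add_sum
  simp only [List.sum_append, Prod.snd_add] at hheight hend
  omega

end IsStepList

/-! ## Legs of a turn -/

namespace IsStepList

variable {Δ : Set Pt} {p q u v : Pt} {A B : List Pt}

theorem fst_left_pos (h : IsStepList Δ p q (A ++ u :: v :: B)) (hdet : det u v < 0) :
    0 < u.1 := by
  have hu := h.lamLT_zero u (by simp)
  have hv := h.lamLT_zero v (by simp)
  simp only [lamLT, det, Prod.fst_zero, Prod.snd_zero] at hu hv hdet
  rcases hu with hu | hu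
  · exact hu
  · have hv' : 0 ≤ v.1 := by omega
    rw [← hu.1] at hdet
    nlinarith [hu.2]

theorem fst_right_pos (h : IsStepList Δ p q (A ++ u :: v :: B)) (hdet : 0 < det u v) :
    0 < v.1 := by
  have hu := h.lamLT_zero u (by simp)
  have hv := h.lamLT_zero v (by simp)
  simp only [lamLT, det, Prod.fst_zero, Prod.snd_zero] at hu hv hdet
  rcases hv with hv | hv
  · exact hv
  · have hu' : 0 ≤ u.1 := by omega
    rw [← hv.1] at hdet
    nlinarith [hv.2]

theorem fst_add_pos (h : IsStepList Δ p q (A ++ u :: v :: B)) (hdet : det u v ≠ 0) :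
    0 < (u + v).1 := by
  have hu := h.lamLT_zero u (by simp)
  have hv := h.lamLT_zero v (by simp)
  simp only [lamLT, Prod.fst_zero, Prod.snd_zero, Prod.fst_add] at hu hv ⊢
  rcases hdet.lt_or_gt with hneg | hpos
  · have hu' := h.fst_left_pos hneg
    omega
  · have hv' := h.fst_right_pos hpos
    omega

theorem snd_left_pos (h : IsStepList Δ p q (A ++ u :: v :: B)) (hdet : det u v < 0)
    (hup : 0 ≤ v.2 ∨ 0 ≤ (u + v).2) : 0 < u.2 := by
  have hu := h.fst_left_pos hdet
  have hv := h.lamLT_zero v (by simp)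
  simp only [lamLT, det, Prod.fst_zero, Prod.snd_zero, Prod.snd_add] at hv hdet hup
  by_contra! hu₂
  have hv₂ : v.2 < 0 := by
    rcases hv with hv | hv
    · nlinarith
    · exact hv.2
  omega

end IsStepList

/-! ## Consequences of nonzero negative multiplicity -/

section NegativeMultiplicity

variable {c d : ℕ} {ν : Multiset ℕ} {w : List Pt}

/-- Undoing a cut loses no down step: the first leg of a right turn has positive width, hence so
does the sum of the two legs. -/
theorem map_downStep_le_filter_isDown (hν : ∀ k ∈ ν, 0 < k) (hw : IsRectStepList c d w)
    (hm : multMinusRect c d {c} ν (pathFrom (0, d) w) ≠ 0) :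
    ν.map downStep ≤ (w : Multiset Pt).filter IsDown := by
  refine induction_of_multOf_ne_zero
    (P := fun w => ν.map downStep ≤ (w : Multiset Pt).filter IsDown) ?_ ?_ ?_ hw hm
  · intro w hinit
    obtain ⟨s, rfl, rfl⟩ := hinit.eq_map_downStep_append
    rw [Multiset.map_coe, Multiset.le_filter]
    refine ⟨Multiset.coe_le.2 (List.sublist_append_left ..).subperm, fun a ha => ?_⟩
    obtain ⟨k, hk, rfl⟩ := List.mem_map.1 (Multiset.mem_coe.1 ha)
    exact isDown_downStep (hν k hk)
  · intro A u v B hw hdet ih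
    have huv : ¬IsDown (u + v) := fun h => (hw.fst_add_pos hdet.ne).ne' h.1
    have hmerged : ((A ++ (u + v) :: B : List Pt) : Multiset Pt).filter IsDown =
        ((A ++ B : List Pt) : Multiset Pt).filter IsDown := by
      rw [← Multiset.coe_eq_coe.2 List.perm_middle.symm, ← Multiset.cons_coe,
        Multiset.filter_cons_of_neg _ huv]
    have hsub : (A ++ B).Sublist (A ++ u :: v :: B) :=
      (((List.Sublist.refl B).cons v).cons u).append_left A
    rw [hmerged] at ih
    exact ih.trans (Multiset.filter_le_filter _ (Multiset.coe_le.2 hsub.subperm))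
  · intro A u v B _ _ ih
    rwa [Multiset.coe_eq_coe.2 ((List.Perm.swap u v B).append_left A)] at ih

theorem find?_append_cons_of_pos {α : Type*} {P : α → Bool} {a : α} (A B : List α) (ha : P a) :
    (A ++ a :: B).find? P = (A.find? P).or (some a) := by
  rw [List.find?_append, List.find?_cons_of_pos ha]

theorem find?_append_cons_of_neg {α : Type*} {P : α → Bool} {a : α} (A B : List α) (ha : ¬P a) :
    (A ++ a :: B).find? P = (A ++ B).find? P := by
  rw [List.find?_append, List.find?_append, List.find?_cons_of_neg ha]

/-- At a right turn the first leg has positive width; it goes up as soon as the second leg or the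
sum of the two legs does not go down. -/
theorem snd_pos_or_eq_of_find?_eq_some (hw : IsRectStepList c d w)
    (hm : multMinusRect c d {c} ν (pathFrom (0, d) w) ≠ 0) {f : Pt}
    (hf : w.find? (0 < ·.1) = some f) : 0 < f.2 ∨ f = (↑c, 0) := by
  have snd_nonneg : ∀ {a : Pt}, 0 < a.2 ∨ a = (↑c, 0) → 0 ≤ a.2 := by
    rintro a (ha | rfl)
    exacts [ha.le, le_rfl]
  refine induction_of_multOf_ne_zero
    (P := fun w => ∀ f, w.find? (0 < ·.1) = some f → 0 < f.2 ∨ f = (↑c, 0)) ?_ ?_ ?_ hw hm f hf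
  · intro w hinit f hf
    obtain ⟨s, -, rfl⟩ := hinit.eq_map_downStep_append
    have hs : (s.map downStep).find? (0 < ·.1) = none := by simp [downStep]
    rw [List.find?_append, hs] at hf
    exact .inr (by simpa using List.mem_of_find?_eq_some hf)
  · intro A u v B hw hdet ih f hf
    have hu := hw.fst_left_pos hdet
    have huv := hw.fst_add_pos hdet.ne
    rw [find?_append_cons_of_pos _ _ (by simpa using hu)] at hf
    rw [find?_append_cons_of_pos _ _ (by simpa using huv)] at ih
    cases hA : A.find? (0 < ·.1) with
    | some a => exact ih f (by rwa [hA] at hf ⊢)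
    | none =>
      obtain rfl : u = f := by simpa [hA] using hf
      exact .inl (hw.snd_left_pos hdet (.inr (snd_nonneg (ih _ (by rw [hA, Option.none_or])))))
  · intro A u v B hw hdet ih f hf
    have hu := hw.fst_left_pos hdet
    by_cases hv : 0 < v.1
    · rw [find?_append_cons_of_pos _ _ (by simpa using hu)] at hf
      rw [find?_append_cons_of_pos _ _ (by simpa using hv)] at ih
      cases hA : A.find? (0 < ·.1) with
      | some a => exact ih f (by rwa [hA] at hf ⊢)
      | none =>
        obtain rfl : u = f := by simpa [hA] using hf
        exact .inl (hw.snd_left_pos hdet (.inl (snd_nonneg (ih _ (by rw [hA, Option.none_or])))))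
    · refine ih f ?_
      rwa [find?_append_cons_of_neg _ _ (by simpa using hv),
        find?_append_cons_of_pos _ _ (by simpa using hu),
        ← find?_append_cons_of_pos _ (v :: B) (by simpa using hu)]

theorem mem_map_downStep_of_head?_eq_some (hc : 0 < c) (hw : IsRectStepList c d w)
    (hm : multMinusRect c d {c} ν (pathFrom (0, d) w) ≠ 0) {a : Pt} (ha : w.head? = some a)
    (ha₁ : a.1 = 0) : a ∈ ν.map downStep := by
  refine induction_of_multOf_ne_zero (P := fun w => w.head? = some a → a ∈ ν.map downStep)
    ?_ ?_ ?_ hw hm ha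
  · intro w hinit hhead
    obtain ⟨s, rfl, rfl⟩ := hinit.eq_map_downStep_append
    cases s with
    | nil =>
      obtain rfl : (↑c, 0) = a := by simpa using hhead
      exact absurd (Int.natCast_eq_zero.1 ha₁) hc.ne'
    | cons k s =>
      obtain rfl : downStep k = a := by simpa using hhead
      exact Multiset.mem_map_of_mem _ (by simp)
  · rintro (_ | ⟨b, A⟩) u v B hw hdet ih hhead
    · obtain rfl : u = a := by simpa using hhead
      exact absurd ha₁ (hw.fst_left_pos hdet).ne'
    · exact ih hhead
  · rintro (_ | ⟨b, A⟩) u v B hw hdet ih hhead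
    · obtain rfl : u = a := by simpa using hhead
      exact absurd ha₁ (hw.fst_left_pos hdet).ne'
    · exact ih hhead

theorem getLast?_ne_of_ne_one (hc : c ≠ 1) (hw : IsRectStepList c d w)
    (hm : multMinusRect c d {c} ν (pathFrom (0, d) w) ≠ 0) : w.getLast? ≠ some (1, 0) := by
  have right_leg_ne : ∀ {A u v}, IsRectStepList c d (A ++ [u, v]) → det u v < 0 → v ≠ (1, 0) := by
    rintro A u v hw hdet rfl
    have hu := hw.snd_left_pos hdet (.inl le_rfl)
    have huv := hw.snd_suffix_sum_nonpos
    simp at huv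
    omega
  refine induction_of_multOf_ne_zero (P := fun w => w.getLast? ≠ some (1, 0)) ?_ ?_ ?_ hw hm
  · intro w hinit
    obtain ⟨s, -, rfl⟩ := hinit.eq_map_downStep_append
    simpa using hc
  · rintro A u v (_ | ⟨b, B⟩) hw hdet ih hlast
    · exact right_leg_ne hw hdet (by simpa using hlast)
    · exact ih (by simpa using hlast)
  · rintro A u v (_ | ⟨b, B⟩) hw hdet ih hlast
    · exact right_leg_ne hw hdet (by simpa using hlast)
    · exact ih (by simpa using hlast)

end NegativeMultiplicity

/-! ## Block structure from nonzero positive multiplicity -/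

/-- The step of width one that leads from the end of the steps `l` back to the height at which they
started. -/
def closing (l : List Pt) : Pt := (1, -l.sum.2)

/-- The steps of a labelled step list that carry the label `j`, in their order. -/
def fibre {κ : Type*} (L : List (Pt × κ)) (j : κ) : List Pt :=
  (L.filter (·.2 = j)).map Prod.fst

/-- A labelling of a step list which exhibits it as a shuffle of the single step `downStep d`,
labelled `none`, and of one block for each `i : ι`, namely the down steps `D i` followed by their
closing step. -/
structure IsBlockLabelling {ι : Type*} (d : ℕ) (D : ι → List Pt) (L : List (Pt × Option ι)) :
    Prop where
  isDown : ∀ i, ∀ a ∈ D i, IsDown a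
  fibre_none : fibre L none = [downStep d]
  fibre_some : ∀ i, fibre L (some i) = D i ++ [closing (D i)]

section Fibre

variable {κ : Type*}

theorem fibre_append (L M : List (Pt × κ)) (j : κ) :
    fibre (L ++ M) j = fibre L j ++ fibre M j := by
  rw [fibre, List.filter_append, List.map_append]; rfl

theorem fibre_cons_self (a : Pt) (j : κ) (L : List (Pt × κ)) :
    fibre ((a, j) :: L) j = a :: fibre L j := by
  simp [fibre]

theorem fibre_cons_of_ne (a : Pt) {i j : κ} (h : i ≠ j) (L : List (Pt × κ)) :
    fibre ((a, i) :: L) j = fibre L j := by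
  simp [fibre, h]

theorem fibre_sublist (L : List (Pt × κ)) (j : κ) : (fibre L j).Sublist (L.map Prod.fst) :=
  List.filter_sublist.map _

theorem coe_map_fst_eq_sum_fibre [Fintype κ] (L : List (Pt × κ)) :
    ((L.map Prod.fst : List Pt) : Multiset Pt) = ∑ j, (fibre L j : Multiset Pt) := by
  induction L with
  | nil => simp [fibre]
  | cons a L ih =>
    have hcons : ∀ j, (fibre (a :: L) j : Multiset Pt) =
        (if a.2 = j then {a.1} else 0) + (fibre L j : Multiset Pt) := by
      intro j
      split_ifs with h
      · rw [← h, fibre_cons_self, Multiset.singleton_add, Multiset.cons_coe]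
      · rw [fibre_cons_of_ne _ h, zero_add]
    simp only [hcons, Finset.sum_add_distrib, Finset.sum_ite_eq, Finset.mem_univ, if_true, ← ih,
      List.map_cons, Multiset.singleton_add, Multiset.cons_coe]

end Fibre

theorem mem_or_eq_of_append_cons_eq_concat {α : Type*} {X Z D : List α} {a f : α}
    (h : X ++ a :: Z = D ++ [f]) : a ∈ D ∨ (X = D ∧ a = f ∧ Z = []) := by
  rcases List.eq_nil_or_concat Z with rfl | ⟨Z, z, rfl⟩
  · exact .inr (by simpa using h)
  · rw [List.concat_eq_append, ← List.cons_append, ← List.append_assoc] at h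
    exact .inl (by simp [← (List.append_inj' h rfl).1])

theorem isDown_and_eq_closing_of_add_eq_closing {u v : Pt} {l : List Pt} (hu : lamLT 0 u)
    (hv : 0 < v.1) (h : u + v = closing l) : IsDown u ∧ v = closing (l ++ [u]) := by
  obtain ⟨h₁, h₂⟩ := Prod.ext_iff.1 h
  simp only [Prod.fst_add, Prod.snd_add, closing] at h₁ h₂
  simp only [lamLT, Prod.fst_zero, Prod.snd_zero] at hu
  refine ⟨⟨by omega, by omega⟩, ?_⟩
  rw [closing, List.sum_append, List.sum_singleton, Prod.snd_add]
  exact Prod.ext (by dsimp only; omega) (by dsimp only; omega)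

namespace IsBlockLabelling

variable {ι : Type*} {d : ℕ} {D : ι → List Pt} {LA LB : List (Pt × Option ι)} {u v : Pt}

theorem replicate_append (c d : ℕ) :
    IsBlockLabelling d (fun _ : Fin c => [])
      ((List.finRange c).map (fun i => ((1, 0), some i)) ++ [(downStep d, none)]) where
  isDown := by simp
  fibre_none := by simp [fibre, List.filter_map, Function.comp_def]
  fibre_some i := by
    have hfilter : (List.finRange c).filter (· = i) = [i] := by
      rw [List.filter_eq, List.count_eq_one_of_mem (List.nodup_finRange c) (List.mem_finRange i),
        List.replicate_one]
    simp [fibre, List.filter_map, Function.comp_def, hfilter, closing]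

theorem of_cut {j : Option ι} (h : IsBlockLabelling d D (LA ++ (u + v, j) :: LB))
    (hu : lamLT 0 u) (hv : 0 < v.1) :
    ∃ D', IsBlockLabelling d D' (LA ++ (u, j) :: (v, j) :: LB) := by
  have huv : 0 < (u + v).1 := by
    simp only [lamLT, Prod.fst_zero, Prod.snd_zero, Prod.fst_add] at hu ⊢
    omega
  have hfibre : ∀ k ≠ j, fibre (LA ++ (u, j) :: (v, j) :: LB) k =
      fibre (LA ++ (u + v, j) :: LB) k := by
    intro k hk
    simp only [fibre_append, fibre_cons_of_ne _ hk.symm]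
  cases j with
  | none =>
    have hnone := h.fibre_none
    rw [fibre_append, fibre_cons_self] at hnone
    have hmem : u + v ∈ [downStep d] := by simp [← hnone]
    rw [List.mem_singleton.1 hmem] at huv
    exact absurd huv (lt_irrefl 0)
  | some i =>
    have hsome := h.fibre_some i
    rw [fibre_append, fibre_cons_self] at hsome
    rcases mem_or_eq_of_append_cons_eq_concat hsome with hmem | ⟨hA, hclose, hB⟩
    · exact absurd (h.isDown i _ hmem).1 huv.ne'
    obtain ⟨hu_down, hv_close⟩ := isDown_and_eq_closing_of_add_eq_closing hu hv hclose
    refine ⟨Function.update D i (D i ++ [u]), ?_, ?_, ?_⟩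
    · rw [Function.forall_update_iff D (p := fun _ l => ∀ a ∈ l, IsDown a)]
      refine ⟨fun a ha => ?_, fun k _ => h.isDown k⟩
      rcases List.mem_append.1 ha with ha | ha
      · exact h.isDown i a ha
      · rwa [List.mem_singleton.1 ha]
    · rw [hfibre none (by simp), h.fibre_none]
    · rw [Function.forall_update_iff D (p := fun k l => fibre _ (some k) = l ++ [closing l])]
      refine ⟨?_, fun k hk => by rw [hfibre _ (by simpa using hk), h.fibre_some]⟩
      rw [fibre_append, fibre_cons_self, fibre_cons_self, hA, hB, ← hv_close, List.append_assoc]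
      rfl

theorem of_push {ju jv : Option ι} (h : IsBlockLabelling d D (LA ++ (v, jv) :: (u, ju) :: LB))
    (hv : 0 < v.1) : IsBlockLabelling d D (LA ++ (u, ju) :: (v, jv) :: LB) := by
  have hne : ju ≠ jv := by
    rintro rfl
    cases ju with
    | none =>
      have hnone := congrArg List.length h.fibre_none
      simp [fibre_append, fibre_cons_self] at hnone
      omega
    | some i =>
      have hsome := h.fibre_some i
      rw [fibre_append, fibre_cons_self, fibre_cons_self] at hsome
      rcases mem_or_eq_of_append_cons_eq_concat hsome with hmem | ⟨-, -, hnil⟩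
      · exact hv.ne' (h.isDown i _ hmem).1
      · exact List.cons_ne_nil _ _ hnil
  have hfibre : ∀ k, fibre (LA ++ (u, ju) :: (v, jv) :: LB) k =
      fibre (LA ++ (v, jv) :: (u, ju) :: LB) k := by
    intro k
    rw [fibre_append, fibre_append]
    rcases eq_or_ne ju k with rfl | hu
    · rw [fibre_cons_self, fibre_cons_of_ne _ hne.symm, fibre_cons_of_ne _ hne.symm,
        fibre_cons_self]
    · by_cases hk : jv = k <;> simp [fibre, hu, hk]
  exact ⟨h.isDown, by rw [hfibre, h.fibre_none], fun i => by rw [hfibre, h.fibre_some]⟩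

end IsBlockLabelling

theorem exists_isBlockLabelling {c d : ℕ} {w : List Pt} (hw : IsRectStepList c d w)
    (hm : multPlusRect c d (Multiset.replicate c 1) {d} (pathFrom (0, d) w) ≠ 0) :
    ∃ (D : Fin c → List Pt) (L : List (Pt × Option (Fin c))),
      IsBlockLabelling d D L ∧ L.map Prod.fst = w := by
  refine induction_of_multOf_ne_zero (P := fun w => ∃ (D : Fin c → List Pt)
    (L : List (Pt × Option (Fin c))), IsBlockLabelling d D L ∧ L.map Prod.fst = w) ?_ ?_ ?_ hw hm
  · intro w hinit
    refine ⟨_, _, .replicate_append c d, ?_⟩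
    rw [hinit.eq_replicate_append]
    simp [Function.comp_def]
  · rintro A u v B hw hdet ⟨D, L, hL, hmap⟩
    obtain ⟨LA, L', rfl, rfl, hL'⟩ := List.map_eq_append_iff.1 hmap
    obtain ⟨⟨_, j⟩, LB, rfl, rfl, rfl⟩ := List.map_eq_cons_iff.1 hL'
    obtain ⟨D', hD'⟩ := hL.of_cut (hw.lamLT_zero u (by simp)) (hw.fst_right_pos hdet)
    exact ⟨D', _, hD', by simp⟩
  · rintro A u v B hw hdet ⟨D, L, hL, hmap⟩
    obtain ⟨LA, L', rfl, rfl, hL'⟩ := List.map_eq_append_iff.1 hmap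
    obtain ⟨⟨_, jv⟩, L'', rfl, rfl, hL''⟩ := List.map_eq_cons_iff.1 hL'
    obtain ⟨⟨_, ju⟩, LB, rfl, rfl, rfl⟩ := List.map_eq_cons_iff.1 hL''
    exact ⟨D, _, hL.of_push (hw.fst_right_pos hdet), by simp⟩

/-- The step list `w` is a shuffle of the single step `downStep d` and of the blocks consisting of
the down steps `D i` followed by their closing step. -/
structure IsBlockShuffle {ι : Type*} [Fintype ι] (d : ℕ) (D : ι → List Pt) (w : List Pt) :
    Prop where
  isDown : ∀ i, ∀ a ∈ D i, IsDown a
  block_sublist : ∀ i, (D i ++ [closing (D i)]).Sublist w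
  coe_eq : (w : Multiset Pt) = {downStep d} + ∑ i, (D i : Multiset Pt) +
    (Finset.univ : Finset ι).val.map fun i => closing (D i)
  getLast?_eq : w.getLast? = some (downStep d) ∨ ∃ i, w.getLast? = some (closing (D i))

theorem IsBlockLabelling.isBlockShuffle {ι : Type*} [Fintype ι] {d : ℕ} {D : ι → List Pt}
    {L : List (Pt × Option ι)} (h : IsBlockLabelling d D L) :
    IsBlockShuffle d D (L.map Prod.fst) where
  isDown := h.isDown
  block_sublist i := h.fibre_some i ▸ fibre_sublist L (some i)
  coe_eq := by
    have hblock : ∀ i, (fibre L (some i) : Multiset Pt) = D i + {closing (D i)} := by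
      intro i
      rw [h.fibre_some, ← Multiset.coe_add, Multiset.coe_singleton]
    have hclosing : ∑ i, ({closing (D i)} : Multiset Pt) =
        Finset.univ.val.map fun i => closing (D i) := by
      rw [← Multiset.sum_map_singleton (Multiset.map (fun i => closing (D i)) _), Multiset.map_map]
      rfl
    rw [coe_map_fst_eq_sum_fibre, Fintype.sum_option, h.fibre_none, Multiset.coe_singleton]
    simp_rw [hblock]
    rw [Finset.sum_add_distrib, ← add_assoc, hclosing]
  getLast?_eq := by
    rcases List.eq_nil_or_concat L with rfl | ⟨L, ⟨a, j⟩, rfl⟩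
    · have hnone := h.fibre_none
      simp [fibre] at hnone
    have hlast : (fibre (L.concat (a, j)) j).getLast? = some a := by
      rw [List.concat_eq_append, fibre_append, fibre_cons_self]
      simp [fibre]
    have hw : ((L.concat (a, j)).map Prod.fst).getLast? = some a := by simp
    rw [hw, ← hlast]
    cases j with
    | none => exact .inl (by rw [h.fibre_none]; rfl)
    | some i => exact .inr ⟨i, by rw [h.fibre_some, List.getLast?_concat]⟩

theorem exists_isBlockShuffle {c d : ℕ} {w : List Pt} (hw : IsRectStepList c d w)
    (hm : multPlusRect c d (Multiset.replicate c 1) {d} (pathFrom (0, d) w) ≠ 0) :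
    ∃ D : Fin c → List Pt, IsBlockShuffle d D w := by
  obtain ⟨D, L, hL, rfl⟩ := exists_isBlockLabelling hw hm
  exact ⟨D, hL.isBlockShuffle⟩

/-! ## Numerical consequences of the block structure -/

theorem snd_sum_nonpos {l : List Pt} (hl : ∀ a ∈ l, IsDown a) : l.sum.2 ≤ 0 := by
  induction l with
  | nil => simp
  | cons a l ih =>
    rw [List.forall_mem_cons] at hl
    rw [List.sum_cons, Prod.snd_add]
    exact add_nonpos hl.1.2.le (ih hl.2)

theorem snd_sum_neg {l : List Pt} (hl : ∀ a ∈ l, IsDown a) (hne : l ≠ []) : l.sum.2 < 0 := by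
  cases l with
  | nil => exact absurd rfl hne
  | cons a l =>
    rw [List.forall_mem_cons] at hl
    rw [List.sum_cons, Prod.snd_add]
    exact add_neg_of_neg_of_nonpos hl.1.2 (snd_sum_nonpos hl.2)

namespace IsBlockShuffle

variable {ι : Type*} [Fintype ι] {d : ℕ} {D : ι → List Pt} {w : List Pt}

theorem snd_closing_nonneg (h : IsBlockShuffle d D w) (i : ι) : 0 ≤ (closing (D i)).2 :=
  neg_nonneg.2 (snd_sum_nonpos (h.isDown i))

theorem snd_closing_pos_iff (h : IsBlockShuffle d D w) {i : ι} :
    0 < (closing (D i)).2 ↔ D i ≠ [] := by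
  refine ⟨?_, fun hne => neg_pos.2 (snd_sum_neg (h.isDown i) hne)⟩
  rintro hpos hnil
  simp [closing, hnil] at hpos

theorem isDown_of_mem_sum (h : IsBlockShuffle d D w) {a : Pt}
    (ha : a ∈ ∑ i, (D i : Multiset Pt)) : IsDown a := by
  obtain ⟨i, -, hi⟩ := Multiset.mem_sum.1 ha
  exact h.isDown i a hi

theorem eq_closing_of_fst_ne_zero (h : IsBlockShuffle d D w) {a : Pt} (ha : a ∈ w)
    (ha₁ : a.1 ≠ 0) : ∃ i, a = closing (D i) := by
  rw [← Multiset.mem_coe, h.coe_eq, Multiset.mem_add, Multiset.mem_add, Multiset.mem_singleton,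
    Multiset.mem_map] at ha
  rcases ha with (rfl | ha) | ⟨i, -, rfl⟩
  · exact absurd rfl ha₁
  · exact absurd (h.isDown_of_mem_sum ha).1 ha₁
  · exact ⟨i, rfl⟩

theorem fst_eq_one_and_snd_nonneg (h : IsBlockShuffle d D w) {a : Pt} (ha : a ∈ w)
    (ha₁ : a.1 ≠ 0) : a.1 = 1 ∧ 0 ≤ a.2 := by
  obtain ⟨i, rfl⟩ := h.eq_closing_of_fst_ne_zero ha ha₁
  exact ⟨rfl, h.snd_closing_nonneg i⟩

theorem filter_isDown (h : IsBlockShuffle d D w) (hd : 0 < d) :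
    (w : Multiset Pt).filter IsDown = {downStep d} + ∑ i, (D i : Multiset Pt) := by
  have hclosing : ∀ a ∈ (Finset.univ : Finset ι).val.map fun i => closing (D i), ¬IsDown a := by
    intro a ha hdown
    obtain ⟨i, -, rfl⟩ := Multiset.mem_map.1 ha
    exact one_ne_zero hdown.1
  rw [h.coe_eq, Multiset.filter_add, Multiset.filter_add, Multiset.filter_singleton,
    if_pos (isDown_downStep hd), Multiset.filter_eq_self.2 fun _ => h.isDown_of_mem_sum,
    Multiset.filter_eq_nil.2 hclosing, add_zero]

theorem filter_upRight (h : IsBlockShuffle d D w) :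
    (w : Multiset Pt).filter (fun a => 0 < a.1 ∧ 0 < a.2) =
      (Finset.univ.filter fun i => D i ≠ []).val.map fun i => closing (D i) := by
  have hdown : ∀ a ∈ ({downStep d} + ∑ i, (D i : Multiset Pt) : Multiset Pt),
      ¬(0 < a.1 ∧ 0 < a.2) := by
    intro a ha hpos
    rcases Multiset.mem_add.1 ha with ha | ha
    · rw [Multiset.mem_singleton.1 ha] at hpos
      exact lt_irrefl 0 hpos.1
    · exact hpos.1.ne' (h.isDown_of_mem_sum ha).1
  have hiff : ∀ i, (0 < (closing (D i)).1 ∧ 0 < (closing (D i)).2) ↔ D i ≠ [] := fun i =>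
    (and_iff_right one_pos).trans h.snd_closing_pos_iff
  rw [h.coe_eq, Multiset.filter_add, Multiset.filter_eq_nil.2 hdown, zero_add, Multiset.filter_map,
    Finset.filter_val]
  simp only [Function.comp_def, hiff]

theorem length_eq (h : IsBlockShuffle d D w) :
    w.length = 1 + (∑ i, (D i : Multiset Pt)).card + Fintype.card ι := by
  have hcard := congrArg Multiset.card h.coe_eq
  simpa only [Multiset.coe_card, Multiset.card_add, Multiset.card_singleton, Multiset.card_map,
    Finset.card_val, Finset.card_univ] using hcard

theorem one_zero_notMem (h : IsBlockShuffle d D w) (hι : Fintype.card ι = 1)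
    (hlen : 2 < w.length) : (1, 0) ∉ w := by
  intro hmem
  obtain ⟨i, hi⟩ := h.eq_closing_of_fst_ne_zero hmem one_ne_zero
  have : Subsingleton ι := Fintype.card_le_one_iff_subsingleton.1 hι.le
  have hsum : ∑ j, (D j : Multiset Pt) = D i := Fintype.sum_subsingleton _ i
  have hlength := h.length_eq
  have hne : D i ≠ [] := by
    intro hnil
    rw [hsum, hnil, hι] at hlength
    simp at hlength
    omega
  exact (h.snd_closing_pos_iff.2 hne).ne (congrArg Prod.snd hi)

end IsBlockShuffle

/-! ## Steps of paths of nonzero multiplicity -/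

section NonzeroMultiplicity

variable {c d : ℕ} {ν : Multiset ℕ} {D : Fin c → List Pt} {w : List Pt}

theorem getLast?_eq_of_mult_ne_zero (hw : IsRectStepList c d w) (hD : IsBlockShuffle d D w)
    (hm : multMinusRect c d {c} ν (pathFrom (0, d) w) ≠ 0) (hlen : 2 < w.length) :
    w.getLast? = some (downStep d) := by
  refine hD.getLast?_eq.resolve_right ?_
  rintro ⟨i, hlast⟩
  obtain ⟨A, rfl⟩ := List.getLast?_eq_some_iff.1 hlast
  have hle := hw.snd_suffix_sum_nonpos
  rw [List.sum_singleton] at hle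
  have hflat : closing (D i) = (1, 0) := Prod.ext rfl (le_antisymm hle (hD.snd_closing_nonneg i))
  by_cases hc : c = 1
  · exact hD.one_zero_notMem (by rw [Fintype.card_fin, hc]) hlen (by simp [hflat])
  · exact getLast?_ne_of_ne_one hc hw hm (by rw [hlast, hflat])

theorem fst_eq_one_and_snd_pos_of_find?_eq_some (hw : IsRectStepList c d w)
    (hD : IsBlockShuffle d D w) (hm : multMinusRect c d {c} ν (pathFrom (0, d) w) ≠ 0)
    (hlen : 2 < w.length) {f : Pt} (hf : w.find? (0 < ·.1) = some f) : f.1 = 1 ∧ 0 < f.2 := by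
  have hmem : f ∈ w := List.mem_of_find?_eq_some hf
  have hpos : 0 < f.1 := by simpa using List.find?_some hf
  obtain ⟨h₁, -⟩ := hD.fst_eq_one_and_snd_nonneg hmem hpos.ne'
  refine ⟨h₁, (snd_pos_or_eq_of_find?_eq_some hw hm hf).resolve_right ?_⟩
  rintro rfl
  obtain rfl : c = 1 := Nat.cast_eq_one.1 h₁
  exact hD.one_zero_notMem (Fintype.card_fin 1) hlen hmem

theorem head_mem_map_downStep (hc : 0 < c) (hw : IsRectStepList c d w) (hD : IsBlockShuffle d D w)
    (hm : multMinusRect c d {c} ν (pathFrom (0, d) w) ≠ 0) (hlen : 2 < w.length) {a : Pt}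
    (ha : w.head? = some a) : a ∈ ν.map downStep := by
  refine mem_map_downStep_of_head?_eq_some hc hw hm ha ?_
  by_contra ha₁
  obtain ⟨w, rfl⟩ := List.head?_eq_some_iff.1 ha
  have hpos : 0 < a.1 := by
    have h₁ := (hD.fst_eq_one_and_snd_nonneg (List.mem_cons_self ..) ha₁).1
    omega
  have hup := (fst_eq_one_and_snd_pos_of_find?_eq_some hw hD hm hlen
    (List.find?_cons_of_pos (by simpa using hpos))).2
  have hle := IsStepList.snd_prefix_sum_nonpos (A := [a]) (B := w) hw
  rw [List.sum_singleton] at hle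
  exact hup.not_ge hle

theorem eq_singleton_of_mem_of_sum_eq (hν : IsPartition ν d) (hd : d ∈ ν) : ν = {d} := by
  obtain ⟨ν', rfl⟩ := Multiset.exists_cons_of_mem hd
  have hsum : ν'.sum = 0 := by simpa using hν.2
  have hnil : ν' = 0 := Multiset.eq_zero_of_forall_notMem fun k hk =>
    (hν.1 k (Multiset.mem_cons_of_mem hk)).ne' (Multiset.sum_eq_zero_iff.1 hsum k hk)
  rw [hnil]; rfl

theorem downStep_injective : Function.Injective downStep := fun k l h => by
  simpa [downStep] using h

/-- If the left edge is a single part, it has the same length as the right edge, but the first and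
the last step of the path are still distinct down steps. -/
theorem pair_le_filter_isDown (hc : 0 < c) (hd : 0 < d) (hw : IsRectStepList c d w)
    (hD : IsBlockShuffle d D w) (hm : multMinusRect c d {c} {d} (pathFrom (0, d) w) ≠ 0)
    (hlen : 2 < w.length) : {downStep d, downStep d} ≤ (w : Multiset Pt).filter IsDown := by
  have hlast := getLast?_eq_of_mult_ne_zero hw hD hm hlen
  cases w with
  | nil => simp at hlen
  | cons a w =>
    obtain rfl : a = downStep d := by simpa using head_mem_map_downStep hc hw hD hm hlen rfl
    rcases List.eq_nil_or_concat w with rfl | ⟨w, b, rfl⟩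
    · simp at hlen
    obtain rfl : b = downStep d := by simpa [List.getLast?_cons] using hlast
    have hsub : [downStep d, downStep d].Sublist (downStep d :: w.concat (downStep d)) :=
      .cons_cons _ (List.singleton_sublist.2 (by simp))
    rw [Multiset.le_filter]
    refine ⟨Multiset.coe_le.2 hsub.subperm, fun b hb => ?_⟩
    obtain rfl : b = downStep d := by simpa using hb
    exact isDown_downStep hd

theorem filter_isDown_eq (hc : 0 < c) (hd : 0 < d) (hν : IsPartition ν d)
    (hw : IsRectStepList c d w) (hD : IsBlockShuffle d D w)
    (hm : multMinusRect c d {c} ν (pathFrom (0, d) w) ≠ 0)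
    (hlen : w.length = ν.card + c + 1) (hlen' : 2 < w.length) :
    (w : Multiset Pt).filter IsDown = downStep d ::ₘ ν.map downStep := by
  have hcard : ((w : Multiset Pt).filter IsDown).card ≤ (downStep d ::ₘ ν.map downStep).card := by
    have hlength := hD.length_eq
    rw [Fintype.card_fin] at hlength
    rw [hD.filter_isDown hd, Multiset.card_add, Multiset.card_singleton, Multiset.card_cons,
      Multiset.card_map]
    omega
  refine (Multiset.eq_of_le_of_card_le ?_ hcard).symm
  by_cases hmem : downStep d ∈ ν.map downStep
  · obtain rfl := eq_singleton_of_mem_of_sum_eq hν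
      ((Multiset.mem_map_of_injective downStep_injective).1 hmem)
    exact pair_le_filter_isDown hc hd hw hD hm hlen'
  · refine (Multiset.cons_le_of_notMem hmem).2 ⟨?_, map_downStep_le_filter_isDown hν.1 hw hm⟩
    rw [hD.filter_isDown hd]
    exact Multiset.mem_add.2 (.inl (Multiset.mem_singleton_self _))

theorem sum_coe_eq_map_downStep (hd : 0 < d) (hD : IsBlockShuffle d D w)
    (h : (w : Multiset Pt).filter IsDown = downStep d ::ₘ ν.map downStep) :
    ∑ i, (D i : Multiset Pt) = ν.map downStep := by
  rw [hD.filter_isDown hd, ← Multiset.singleton_add] at h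
  exact add_left_cancel h

theorem eq_one_zero_of_mem (hw : IsRectStepList c d w) (hD : IsBlockShuffle d D w) {a : Pt}
    (ha : a ∈ w) (hdown : ¬IsDown a) (hup : ¬(0 < a.1 ∧ 0 < a.2)) : a = (1, 0) := by
  have hpos : 0 < a.1 := (hw.lamLT_zero a ha).resolve_right fun h => hdown ⟨h.1.symm, h.2⟩
  obtain ⟨h₁, h₂⟩ := hD.fst_eq_one_and_snd_nonneg ha hpos.ne'
  exact Prod.ext h₁ (le_antisymm (not_lt.1 fun h => hup ⟨hpos, h⟩) h₂)

end NonzeroMultiplicity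

/-! ## Distributing the parts over the blocks -/

theorem exists_eq_map_filter_of_map_eq_sum {α ι β : Type*} [Fintype ι] [Nonempty ι] (g : α → β)
    (t : Finset α) {D : ι → Multiset β} (h : t.val.map g = ∑ i, D i) :
    ∃ f : α → ι, ∀ i, D i = (t.filter (f · = i)).val.map g := by
  induction t using Finset.induction_on generalizing D with
  | empty =>
    have hD : ∀ i, D i = 0 := by simpa [eq_comm, Multiset.sum_eq_zero_iff] using h
    exact ⟨fun _ => Classical.arbitrary ι, by simpa using hD⟩
  | insert a t ha ih =>
    rw [Finset.insert_val_of_notMem ha, Multiset.map_cons] at h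
    obtain ⟨i, -, hi⟩ := Multiset.mem_sum.1 (h ▸ Multiset.mem_cons_self (g a) _)
    obtain ⟨E, hE⟩ := Multiset.exists_cons_of_mem hi
    have hsum : t.val.map g = ∑ k, Function.update D i E k := by
      rw [← Multiset.cons_inj_right (g a), h, Finset.sum_update_of_mem (Finset.mem_univ i),
        ← Multiset.cons_add, ← hE, ← Finset.sum_erase_add _ _ (Finset.mem_univ i), add_comm,
        Finset.sdiff_singleton_eq_erase]
    obtain ⟨f, hf⟩ := ih hsum
    refine ⟨Function.update f a i, fun k => ?_⟩
    have hf' : ∀ b ∈ t, Function.update f a i b = f b := fun b hb =>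
      Function.update_of_ne (ne_of_mem_of_not_mem hb ha) _ _
    have hk := hf k
    rw [Finset.filter_insert, Function.update_self,
      Finset.filter_congr (fun b hb => by rw [hf' b hb])]
    split_ifs with hik
    · subst hik
      rw [Finset.insert_val_of_notMem (by simp [ha]), Multiset.map_cons, ← hk,
        Function.update_self, hE]
    · rw [← hk, Function.update_of_ne (Ne.symm hik)]

theorem exists_eq_append_cons_of_concat_sublist {α : Type*} {l w : List α} {a : α}
    (h : (l ++ [a]).Sublist w) : ∃ X Z, w = X ++ a :: Z ∧ l.Sublist X := by
  obtain ⟨r₁, r₂, rfl, h₁, h₂⟩ := List.append_sublist_iff.1 h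
  obtain ⟨s, t, rfl⟩ := List.append_of_mem (List.singleton_sublist.1 h₂)
  exact ⟨r₁ ++ s, t, (List.append_assoc ..).symm, h₁.trans (List.sublist_append_left ..)⟩

theorem exists_stepAt_eq_of_concat_sublist {p : Pt} {l w : List Pt} {a : Pt}
    (h : (l ++ [a]).Sublist w) :
    ∃ m < w.length, stepAt (pathFrom p w) m = a ∧
      ∀ b ∈ l, ∃ j < m, stepAt (pathFrom p w) j = b := by
  obtain ⟨X, Z, rfl, hl⟩ := exists_eq_append_cons_of_concat_sublist h
  refine ⟨X.length, by simp, stepAt_pathFrom_append_cons .., fun b hb => ?_⟩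
  obtain ⟨j, hj, rfl⟩ := List.getElem_of_mem (hl.subset hb)
  refine ⟨j, hj, ?_⟩
  rw [stepAt_pathFrom p (by rw [List.length_append]; omega), List.getElem_append_left hj]

theorem closing_eq_of_coe_eq_map {α : Type*} {l : List Pt} {t : Finset α} {x : α → ℕ}
    (h : (l : Multiset Pt) = t.val.map fun k => downStep (x k)) :
    closing l = (1, ∑ k ∈ t, (x k : ℤ)) := by
  have hsum : l.sum = ∑ k ∈ t, downStep (x k) := by rw [← Multiset.sum_coe, h]; rfl
  rw [closing, hsum, Prod.snd_sum, ← Finset.sum_neg_distrib]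
  simp only [downStep, neg_neg]

theorem isPartition_ofFn {n : ℕ} {x : Fin n → ℕ} (hx : ∀ i, 0 < x i) :
    IsPartition (List.ofFn x : List ℕ) (∑ i, x i) := by
  refine ⟨fun k hk => ?_, by rw [Multiset.sum_coe, List.sum_ofFn]⟩
  obtain ⟨i, rfl⟩ := List.mem_ofFn.1 (Multiset.mem_coe.1 hk)
  exact hx i

/-- The index sets are the fibres, over the labels of the nonempty blocks, of a map that sends the
index of each part to a block containing the corresponding down step. -/
theorem IsBlockShuffle.exists_partition {ι α : Type*} [Fintype ι] [Nonempty ι] [Fintype α] {d : ℕ}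
    {D : ι → List Pt} {w : List Pt} {x : α → ℕ} (p : Pt) (h : IsBlockShuffle d D w)
    (hsum : ∑ i, (D i : Multiset Pt) = Finset.univ.val.map fun k => downStep (x k)) :
    ∃ (ℓ : ℕ) (I : Fin ℓ → Finset α), (∀ a, (I a).Nonempty) ∧
      (∀ a b, a ≠ b → Disjoint (I a) (I b)) ∧ (∀ k, ∃ a, k ∈ I a) ∧
      upRightSteps (pathFrom p w) = (List.ofFn fun a => ((1 : ℤ), ∑ k ∈ I a, (x k : ℤ))) ∧
      ∀ a, ∃ m < w.length, stepAt (pathFrom p w) m = (1, ∑ k ∈ I a, (x k : ℤ)) ∧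
        ∀ k ∈ I a, ∃ j < m, stepAt (pathFrom p w) j = downStep (x k) := by
  obtain ⟨f, hf⟩ := exists_eq_map_filter_of_map_eq_sum _ _ hsum.symm
  have hclosing := fun i => closing_eq_of_coe_eq_map (hf i)
  set S := (Finset.univ.filter fun i => D i ≠ []).toList with hS
  have hmem : ∀ i, i ∈ S ↔ D i ≠ [] := by simp [hS]
  refine ⟨S.length, fun a => Finset.univ.filter (f · = S.get a), fun a => ?_, fun a b hab => ?_,
    fun k => ?_, ?_, fun a => ?_⟩
  · have hne := (hmem _).1 (S.get_mem a)
    rw [← List.length_pos_iff, ← Multiset.coe_card, hf, Multiset.card_map] at hne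
    exact Finset.card_pos.1 hne
  · refine Finset.disjoint_filter.2 fun k _ ha hb => hab ?_
    exact (Finset.nodup_toList _).injective_get (ha.symm.trans hb)
  · have hk : downStep (x k) ∈ (D (f k) : Multiset Pt) := by
      rw [hf]
      exact Multiset.mem_map_of_mem _ (by simp)
    obtain ⟨a, ha⟩ := List.get_of_mem ((hmem (f k)).2 (List.ne_nil_of_mem hk))
    exact ⟨a, Finset.mem_filter.2 ⟨Finset.mem_univ _, ha.symm⟩⟩
  · rw [upRightSteps, steps_pathFrom, h.filter_upRight]
    simp only [← hclosing]
    rw [← Finset.coe_toList, Multiset.map_coe, ← hS]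
    exact congrArg _ (List.ofFn_getElem_eq_map S fun i => closing (D i)).symm
  · obtain ⟨m, hm, hstep, hearlier⟩ :=
      exists_stepAt_eq_of_concat_sublist (p := p) (h.block_sublist (S.get a))
    refine ⟨m, hm, by rw [hstep, hclosing], fun k hk => hearlier _ ?_⟩
    rw [← Multiset.mem_coe, hf]
    exact Multiset.mem_map_of_mem _ hk

/-! ## The structure theorem -/

theorem pt_of_getLast?_eq {c d m : ℕ} {w : List Pt} (hw : IsRectStepList c d w)
    (hlast : w.getLast? = some (downStep d)) (hlen : w.length = m + 1) :
    pt (pathFrom (0, d) w) m = (↑c, ↑d) ∧ pt (pathFrom (0, d) w) (m + 1) = (↑c, 0) := by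
  have hend := hw.add_sum
  obtain ⟨A, rfl⟩ := List.getLast?_eq_some_iff.1 hlast
  obtain rfl : A.length = m := by simpa using hlen
  refine ⟨?_, ?_⟩
  · rw [pt_pathFrom_append]
    rw [List.sum_append, List.sum_singleton, ← add_assoc] at hend
    rw [eq_sub_of_add_eq hend]
    simp [downStep]
  · rw [← hlen, pt_pathFrom_length, hend]

theorem find?_eq_some_stepAt {p : Pt} {w : List Pt} {k : ℕ} (hk : k < w.length)
    (hpos : 0 < (stepAt (pathFrom p w) k).1)
    (hfirst : ∀ j < k, (stepAt (pathFrom p w) j).1 ≤ 0) :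
    w.find? (0 < ·.1) = some (stepAt (pathFrom p w) k) := by
  refine List.find?_eq_some_iff_getElem.2
    ⟨by simpa using hpos, k, hk, (stepAt_pathFrom p hk).symm, fun j hj => ?_⟩
  rw [← stepAt_pathFrom p (hj.trans hk)]
  simpa using hfirst j hj

theorem stepAt_mem {p : Pt} {w : List Pt} {k : ℕ} (hk : k < w.length) :
    stepAt (pathFrom p w) k ∈ w :=
  stepAt_pathFrom p hk ▸ List.getElem_mem hk

theorem structure_of_nonzero_paths_general (c n : ℕ) (hc : 0 < c) (hn : 0 < n)
    (x : Fin n → ℕ) (hx : ∀ i, 0 < x i)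
    (γ : List Pt) (hγ : IsPathRect c (∑ i, x i) γ) (hlen : γ.length = n + c + 2)
    (hmult : multRect c (∑ i, x i) {c} (Multiset.replicate c 1)
        ((List.ofFn x : List ℕ) : Multiset ℕ) {∑ i, x i} γ ≠ 0) :
    (pt γ (n + c) = ((c : ℤ), ((∑ i, x i : ℕ) : ℤ)) ∧
      pt γ (n + c + 1) = ((c : ℤ), 0)) ∧
    (∀ k, k + 1 < γ.length → 0 < (stepAt γ k).1 →
      (∀ j, j < k → (stepAt γ j).1 ≤ 0) →
      (stepAt γ k).1 = 1 ∧ 0 < (stepAt γ k).2) ∧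
    (downSteps γ =
      ((List.ofFn fun i => ((0 : ℤ), -(x i : ℤ))) : Multiset Pt) +
        {((0 : ℤ), -((∑ i, x i : ℕ) : ℤ))}) ∧
    (∃ (ℓ : ℕ) (I : Fin ℓ → Finset (Fin n)),
      (∀ a, (I a).Nonempty) ∧ (∀ a b, a ≠ b → Disjoint (I a) (I b)) ∧
      (∀ i, ∃ a, i ∈ I a) ∧
      upRightSteps γ =
        ((List.ofFn fun a => ((1 : ℤ), ∑ i ∈ I a, (x i : ℤ))) : Multiset Pt) ∧
      ∀ a, ∃ m, m + 1 < γ.length ∧ stepAt γ m = ((1 : ℤ), ∑ i ∈ I a, (x i : ℤ)) ∧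
        ∀ i ∈ I a, ∃ j, j < m ∧ stepAt γ j = ((0 : ℤ), -(x i : ℤ))) ∧
    (∀ k, k + 1 < γ.length → ¬((stepAt γ k).1 = 0 ∧ (stepAt γ k).2 < 0) →
      ¬(0 < (stepAt γ k).1 ∧ 0 < (stepAt γ k).2) → stepAt γ k = ((1 : ℤ), 0)) := by
  obtain ⟨w, rfl, hw⟩ := hγ.exists_isRectStepList
  obtain ⟨hplus, hminus⟩ := mul_ne_zero_iff.1 hmult
  obtain ⟨D, hD⟩ := exists_isBlockShuffle hw hplus
  have hν := isPartition_ofFn hx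
  have hwlen : w.length = n + c + 1 := by simpa [length_pathFrom] using hlen
  have hlong : 2 < w.length := by omega
  have hd : 0 < ∑ i, x i :=
    Finset.sum_pos (fun i _ => hx i) ⟨⟨0, hn⟩, Finset.mem_univ _⟩
  have hdown := filter_isDown_eq hc hd hν hw hD hminus (by simpa using hwlen) hlong
  have hsum : ∑ i, (D i : Multiset Pt) = Finset.univ.val.map fun k => downStep (x k) := by
    rw [sum_coe_eq_map_downStep hd hD hdown, Multiset.map_coe, List.map_ofFn, Fin.univ_val_map,
      Function.comp_def]
  have : Nonempty (Fin c) := ⟨⟨0, hc⟩⟩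
  refine ⟨?_, fun k hk hpos hfirst => ?_, ?_, ?_, fun k hk hnd hnu => ?_⟩
  · exact pt_of_getLast?_eq hw (getLast?_eq_of_mult_ne_zero hw hD hminus hlong) hwlen
  · exact fst_eq_one_and_snd_pos_of_find?_eq_some hw hD hminus hlong
      (find?_eq_some_stepAt (by simpa [length_pathFrom] using hk) hpos hfirst)
  · rw [downSteps_pathFrom, hdown, Multiset.map_coe, List.map_ofFn, add_comm]
    rfl
  · simpa only [length_pathFrom, Nat.add_lt_add_iff_right, downStep] using
      hD.exists_partition (0, _) hsum
  · exact eq_one_zero_of_mem hw hD (stepAt_mem (by simpa [length_pathFrom] using hk)) hnd hnu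

/-- Structure of the paths with nonzero multiplicity in the rectangle with
boundary data `μ₁ = (c)`, `μ₂ = (1,…,1)`, `ν₁ = (x₁,…,xₙ)`, `ν₂ = (d)`, for generic `x`. -/
theorem structure_of_nonzero_paths (c n : ℕ) (hc : 0 < c) (hn : 0 < n)
    (x : Fin n → ℕ) (hx : ∀ i, 0 < x i) (hgen : Generic x)
    (γ : List Pt) (hγ : IsPathRect c (∑ i, x i) γ) (hlen : γ.length = n + c + 2)
    (hmult : multRect c (∑ i, x i) {c} (Multiset.replicate c 1)
        ((List.ofFn x : List ℕ) : Multiset ℕ) {∑ i, x i} γ ≠ 0) :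
    -- (1) the last step is the full right edge
    (pt γ (n + c) = ((c : ℤ), ((∑ i, x i : ℕ) : ℤ)) ∧
      pt γ (n + c + 1) = ((c : ℤ), 0)) ∧
    -- (2) the first step with positive horizontal displacement is up-right, of width 1
    (∀ k, k + 1 < γ.length → 0 < (stepAt γ k).1 →
      (∀ j, j < k → (stepAt γ j).1 ≤ 0) →
      (stepAt γ k).1 = 1 ∧ 0 < (stepAt γ k).2) ∧
    -- (3) the multiset of down steps is {(0,-x₁),…,(0,-xₙ),(0,-d)}
    (downSteps γ =
      ((List.ofFn fun i => ((0 : ℤ), -(x i : ℤ))) : Multiset Pt) +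
        {((0 : ℤ), -((∑ i, x i : ℕ) : ℤ))}) ∧
    -- (4) the up-right steps are (1, x_{I_a}) for a partition I₁,…,I_ℓ of {1,…,n}, and the
    -- down steps (0,-xᵢ), i ∈ I_a, occur before the step (1, x_{I_a})
    (∃ (ℓ : ℕ) (I : Fin ℓ → Finset (Fin n)),
      (∀ a, (I a).Nonempty) ∧ (∀ a b, a ≠ b → Disjoint (I a) (I b)) ∧
      (∀ i, ∃ a, i ∈ I a) ∧
      upRightSteps γ =
        ((List.ofFn fun a => ((1 : ℤ), ∑ i ∈ I a, (x i : ℤ))) : Multiset Pt) ∧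
      ∀ a, ∃ m, m + 1 < γ.length ∧ stepAt γ m = ((1 : ℤ), ∑ i ∈ I a, (x i : ℤ)) ∧
        ∀ i ∈ I a, ∃ j, j < m ∧ stepAt γ j = ((0 : ℤ), -(x i : ℤ))) ∧
    -- (5) every remaining step equals (1,0)
    (∀ k, k + 1 < γ.length → ¬((stepAt γ k).1 = 0 ∧ (stepAt γ k).2 < 0) →
      ¬(0 < (stepAt γ k).1 ∧ 0 < (stepAt γ k).2) → stepAt γ k = ((1 : ℤ), 0)) := by
  exact structure_of_nonzero_paths_general c n hc hn x hx γ hγ hlen hmult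

end TropPaths
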